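/- Fix θ > 0. For all Schwartz functions f, g : ℝ^d × ℝ^d → ℂ, the function f ⋆_θ g is Lebesgue integrable on ℝ^d × ℝ^d and satisfies the tracial identity ∫_{ℝ^d × ℝ^d} (f ⋆_θ g)(x,w) dx dw = ∫_{ℝ^d × ℝ^d} f(x,w) g(x,w) dx dw. -/

import Mathlib

open MeasureTheory Complex Real

/-- The star product `(f ⋆_θ g)(x,w)` on `ℝ^d × ℝ^d`. -/
noncomputable def sprod (d : ℕ) (θ : ℝ) (f g : (Fin d → ℝ) × (Fin d → ℝ) → ℂ) :
    (Fin d → ℝ) × (Fin d → ℝ) → ℂ := fun z =>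
  (((Real.pi * θ) ^ (-(2 * d : ℤ)) : ℝ) : ℂ) *
    ∫ p : ((Fin d → ℝ) × (Fin d → ℝ)) × ((Fin d → ℝ) × (Fin d → ℝ)),
      f p.1 * g p.2 * Complex.exp (2 * Complex.I / (θ : ℂ) *
        ((∑ i, (p.2.1 i - z.1 i) * p.1.2 i + ∑ i, (z.1 i - p.1.1 i) * p.2.2 i +
          ∑ i, (p.1.1 i - p.2.1 i) * z.2 i : ℝ) : ℂ))

namespace StarTracial

open scoped FourierTransform

abbrev Z (d : ℕ) := (Fin d → ℝ) × (Fin d → ℝ)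
abbrev E (d : ℕ) := EuclideanSpace ℝ (Fin d ⊕ Fin d)

instance instHaarZ (d : ℕ) : (volume : Measure (Z d)).IsAddHaarMeasure :=
  Measure.prod.instIsAddHaarMeasure (volume : Measure (Fin d → ℝ)) (volume : Measure (Fin d → ℝ))

/-- identification of the Euclidean space with the product -/
noncomputable def eL (d : ℕ) : E d ≃L[ℝ] Z d :=
  LinearEquiv.toContinuousLinearEquiv
  { toFun := fun v => (fun i => v (Sum.inl i), fun i => v (Sum.inr i))
    invFun := fun z => WithLp.toLp 2 (Sum.elim z.1 z.2)
    map_add' := fun _ _ => rfl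
    map_smul' := fun _ _ => rfl
    left_inv := fun v => by ext i; rcases i with i | i <;> rfl
    right_inv := fun _ => rfl }

/-- rotated identification -/
noncomputable def jL (d : ℕ) : Z d ≃L[ℝ] E d :=
  LinearEquiv.toContinuousLinearEquiv
  { toFun := fun z => WithLp.toLp 2 (Sum.elim z.2 (-z.1))
    invFun := fun v => (fun i => - v (Sum.inr i), fun i => v (Sum.inl i))
    map_add' := fun a b => by ext i; rcases i with i | i <;> simp [add_comm]
    map_smul' := fun a b => by ext i; rcases i with i | i <;> simp
    left_inv := fun v => by ext i <;> simp
    right_inv := fun v => by ext i; rcases i with i | i <;> simp }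

lemma eL_mp (d : ℕ) : MeasurePreserving (eL d) volume volume :=
  (volume_measurePreserving_sumPiEquivProdPi (fun _ : Fin d ⊕ Fin d => ℝ)).comp
    (PiLp.volume_preserving_ofLp (Fin d ⊕ Fin d))

lemma jL_mp (d : ℕ) : MeasurePreserving (jL d) volume volume := by
  have h1 := (PiLp.volume_preserving_toLp (Fin d ⊕ Fin d))
  have h2 := (volume_measurePreserving_sumPiEquivProdPi (fun _ : Fin d ⊕ Fin d => ℝ)).symm
  have h3 : MeasurePreserving (Prod.map id (fun x => -x) : Z d → Z d) volume volume :=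
    (MeasurePreserving.id (volume : Measure (Fin d → ℝ))).prod
      (Measure.measurePreserving_neg (volume : Measure (Fin d → ℝ)))
  have h4 : MeasurePreserving (Prod.swap : Z d → Z d) volume volume :=
    Measure.measurePreserving_swap
  have h5 := h1.comp (h2.comp (h3.comp h4))
  have h6 : (jL d : Z d → E d) = WithLp.toLp 2 ∘
      (MeasurableEquiv.sumPiEquivProdPi (fun _ : Fin d ⊕ Fin d => ℝ)).symm ∘
      (Prod.map id (fun x => -x) : Z d → Z d) ∘ Prod.swap := by
    funext z
    refine PiLp.ext fun i => ?_
    rcases i with i | i <;> rfl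
  rw [h6]
  exact h5

lemma eL_emb (d : ℕ) : MeasurableEmbedding (eL d) :=
  (eL d).toHomeomorph.measurableEmbedding

lemma jL_emb (d : ℕ) : MeasurableEmbedding (jL d) :=
  (jL d).toHomeomorph.measurableEmbedding

/-- symplectic form -/
noncomputable def S {d : ℕ} (a b : Z d) : ℝ := ∑ i, (a.1 i * b.2 i - a.2 i * b.1 i)

noncomputable def ph {d : ℕ} (θ : ℝ) (a b : Z d) : ℂ :=
  Complex.exp (2 * Complex.I / (θ : ℂ) * (S a b : ℂ))

lemma norm_ph {d : ℕ} (θ : ℝ) (a b : Z d) : ‖ph θ a b‖ = 1 := by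
  have : 2 * Complex.I / (θ : ℂ) * (S a b : ℂ) = ((2 / θ * S a b : ℝ) : ℂ) * Complex.I := by
    push_cast; ring
  rw [ph, this, Complex.norm_exp_ofReal_mul_I]

lemma ph_cont {d : ℕ} (θ : ℝ) : Continuous (fun p : Z d × Z d => ph θ p.1 p.2) := by
  unfold ph S
  fun_prop

noncomputable def gE {d : ℕ} (g : SchwartzMap (Z d) ℂ) : SchwartzMap (E d) ℂ :=
  SchwartzMap.compCLMOfContinuousLinearEquiv ℂ (eL d) g

noncomputable def G {d : ℕ} (θ : ℝ) (g : SchwartzMap (Z d) ℂ) (z : Z d) : ℂ :=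
  𝓕 (gE g) ((Real.pi * θ)⁻¹ • jL d z)

lemma inner_eq {d : ℕ} (z : Z d) (v : E d) : inner ℝ v (jL d z) = - S z (eL d v) := by
  simp only [PiLp.inner_apply, Fintype.sum_sum_type, S, ← Finset.sum_neg_distrib,
    ← Finset.sum_add_distrib]
  refine Finset.sum_congr rfl fun i _ => ?_
  change z.2 i * v (Sum.inl i) + (-z.1 i) * v (Sum.inr i)
    = -(z.1 i * v (Sum.inr i) - z.2 i * v (Sum.inl i))
  ring

lemma G_eq {d : ℕ} (θ : ℝ) (hθ : 0 < θ) (g : SchwartzMap (Z d) ℂ) (z : Z d) :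
    G θ g z = ∫ y, g y * ph θ z y := by
  rw [← (eL_mp d).integral_comp (eL_emb d), G, SchwartzMap.fourier_coe, Real.fourier_eq']
  refine integral_congr_ae (Filter.Eventually.of_forall fun v => ?_)
  simp only [smul_eq_mul, inner_smul_right, inner_eq, ph, gE,
    SchwartzMap.compCLMOfContinuousLinearEquiv_apply, Function.comp_apply]
  rw [mul_comm]
  congr 2
  have : (Real.pi : ℂ) ≠ 0 := by exact_mod_cast Real.pi_ne_zero
  have : (θ : ℂ) ≠ 0 := by exact_mod_cast hθ.ne'
  push_cast
  field_simp

lemma G_int {d : ℕ} (θ : ℝ) (hθ : 0 < θ) (g : SchwartzMap (Z d) ℂ) : Integrable (G θ g) := by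
  have h : Integrable (fun v : E d => 𝓕 (gE g) ((Real.pi * θ)⁻¹ • v)) :=
    (𝓕 (gE g)).integrable.comp_smul (by positivity)
  exact ((jL_mp d).integrable_comp_emb (jL_emb d)).2 h

lemma G_inv {d : ℕ} (θ : ℝ) (hθ : 0 < θ) (g : SchwartzMap (Z d) ℂ) (y : Z d) :
    ∫ z, ph θ y z * G θ g z = (((Real.pi * θ) ^ (2 * d : ℕ) : ℝ) : ℂ) * g y := by
  have h1 : 𝓕⁻ (𝓕 (gE g)) ((eL d).symm y) = g y := by
    rw [FourierTransform.fourierInv_fourier_eq]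
    simp [gE]
  rw [← h1, SchwartzMap.fourierInv_coe, Real.fourierInv_eq']
  have h2 := Measure.integral_comp_smul (volume : Measure (E d))
    (fun v : E d => Complex.exp (((2 * Real.pi * inner ℝ v ((eL d).symm y) : ℝ) : ℂ) * Complex.I)
      • 𝓕 (gE g) v) (Real.pi * θ)⁻¹
  have hp : 0 < (Real.pi * θ) ^ (d + d) := by positivity
  have h3 : |(((Real.pi * θ)⁻¹ ^ Module.finrank ℝ (E d))⁻¹)| = (Real.pi * θ) ^ (2 * d : ℕ) := by
    rw [finrank_euclideanSpace, Fintype.card_sum, Fintype.card_fin, inv_pow, inv_inv,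
      abs_of_pos hp, two_mul]
  rw [h3] at h2
  rw [← Complex.real_smul, ← h2, ← (jL_mp d).integral_comp (jL_emb d)]
  refine integral_congr_ae (Filter.Eventually.of_forall fun z => ?_)
  simp only [smul_eq_mul, G, ph]
  congr 2
  rw [real_inner_comm, inner_smul_right, inner_eq, ContinuousLinearEquiv.apply_symm_apply]
  have hS : S y z = - S z y := by
    simp only [S, ← Finset.sum_neg_distrib]
    exact Finset.sum_congr rfl fun i _ => by ring
  rw [hS]
  have : (Real.pi : ℂ) ≠ 0 := by exact_mod_cast Real.pi_ne_zero
  have : (θ : ℂ) ≠ 0 := by exact_mod_cast hθ.ne'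
  push_cast
  field_simp

noncomputable def K {d : ℕ} (θ : ℝ) (f g : SchwartzMap (Z d) ℂ) (p : Z d × Z d) : ℂ :=
  ph θ p.2 p.1 * (f p.2 * G θ g (p.1 - p.2))

lemma K_int {d : ℕ} (θ : ℝ) (hθ : 0 < θ) (f g : SchwartzMap (Z d) ℂ) :
    Integrable (K θ f g) ((volume : Measure (Z d)).prod volume) := by
  have h := (f.integrable (μ := volume)).convolution_integrand (ContinuousLinearMap.mul ℝ ℂ)
    (G_int θ hθ g)
  refine Integrable.bdd_mul (c := 1) h ?_ (Filter.Eventually.of_forall fun p => (norm_ph _ _ _).le)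
  exact ((ph_cont θ).comp continuous_swap).aestronglyMeasurable

lemma sprod_eq {d : ℕ} (θ : ℝ) (hθ : 0 < θ) (f g : SchwartzMap (Z d) ℂ) (z : Z d) :
    sprod d θ f g z = (((Real.pi * θ) ^ (-(2 * d : ℤ)) : ℝ) : ℂ) * ∫ y, K θ f g (z, y) := by
  have key : ∀ p : Z d × Z d, f p.1 * g p.2 * Complex.exp (2 * Complex.I / (θ : ℂ) *
        ((∑ i, (p.2.1 i - z.1 i) * p.1.2 i + ∑ i, (z.1 i - p.1.1 i) * p.2.2 i +
          ∑ i, (p.1.1 i - p.2.1 i) * z.2 i : ℝ) : ℂ))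
      = (ph θ p.1 z * ph θ (z - p.1) p.2) * (f p.1 * g p.2) := by
    intro p
    rw [mul_comm]
    congr 1
    rw [ph, ph, ← Complex.exp_add, ← mul_add, ← Complex.ofReal_add]
    congr 3
    simp only [S, ← Finset.sum_add_distrib]
    refine Finset.sum_congr rfl fun i _ => ?_
    simp
    ring
  rw [sprod]
  simp only [key]
  congr 1
  have hint : Integrable (fun p : Z d × Z d =>
      (ph θ p.1 z * ph θ (z - p.1) p.2) * (f p.1 * g p.2))
      ((volume : Measure (Z d)).prod volume) := by
    refine Integrable.bdd_mul (c := 1) (f.integrable.mul_prod g.integrable) ?_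
      (Filter.Eventually.of_forall fun p => by simp [norm_ph])
    refine Continuous.aestronglyMeasurable ?_
    unfold ph S
    fun_prop
  rw [Measure.volume_eq_prod, integral_prod _ hint]
  refine integral_congr_ae (Filter.Eventually.of_forall fun y => ?_)
  simp only [K, G_eq θ hθ, ← integral_const_mul]
  refine integral_congr_ae (Filter.Eventually.of_forall fun x => ?_)
  simp only
  ring

end StarTracial

open StarTracial in
theorem star_tracial (d : ℕ) (θ : ℝ) (hθ : 0 < θ)
    (f g : SchwartzMap ((Fin d → ℝ) × (Fin d → ℝ)) ℂ) :
    Integrable (sprod d θ f g) (volume : Measure ((Fin d → ℝ) × (Fin d → ℝ))) ∧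
    ∫ z : (Fin d → ℝ) × (Fin d → ℝ), sprod d θ f g z =
      ∫ z : (Fin d → ℝ) × (Fin d → ℝ), f z * g z := by
  have hK := K_int θ hθ f g
  have hs : sprod d θ f g = fun z =>
      (((Real.pi * θ) ^ (-(2 * d : ℤ)) : ℝ) : ℂ) * ∫ y, K θ f g (z, y) :=
    funext (sprod_eq θ hθ f g)
  rw [hs]
  refine ⟨hK.integral_prod_left.const_mul _, ?_⟩
  rw [integral_const_mul, integral_integral_swap (f := fun z y => K θ f g (z, y)) hK,
    ← integral_const_mul]
  refine integral_congr_ae (Filter.Eventually.of_forall fun y => ?_)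
  have h1 : ∀ z, K θ f g (z, y) = f y * (fun u => ph θ y u * G θ g u) (z - y) := by
    intro z
    have : S y (z - y) = S y z := by
      simp only [S]
      refine Finset.sum_congr rfl fun i _ => ?_
      simp
      ring
    simp only [K, ph, this]
    ring
  simp only [h1]
  rw [integral_const_mul, integral_sub_right_eq_self (fun u => ph θ y u * G θ g u) y,
    G_inv θ hθ]
  have hne : Real.pi * θ ≠ 0 := by positivity
  have hc : (((Real.pi * θ) ^ (-(2 * d : ℤ)) : ℝ) : ℂ) * (((Real.pi * θ) ^ (2 * d : ℕ) : ℝ) : ℂ)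
      = 1 := by
    rw [← Complex.ofReal_mul, zpow_neg, ← Nat.cast_ofNat, ← Nat.cast_mul, zpow_natCast,
      inv_mul_cancel₀ (pow_ne_zero _ hne), Complex.ofReal_one]
  linear_combination (f y * g y) * hc
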